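/- Let R be a regular domain with a generalized regular system of parameters x = x_1,…,x_p, and let I, J ⊆ R be ideals whose integral closures are monomial ideals in x. Then I̅ = J̅ if and only if Γ_x(I) = Γ_x(J). -/

import Mathlib

open Ideal Set Pointwise

noncomputable section

namespace NND

variable {R : Type*} [CommRing R] {p : ℕ}

/-- The monomial `x^a = x 0 ^ a 0 * ⋯` in the elements `x`. -/
def mono (x : Fin p → R) (a : Fin p → ℕ) : R := ∏ i, x i ^ a i

/-- A (commutative) ring is regular local if it is Noetherian local and its maximal ideal
can be generated by `dim R` elements. -/
def IsRegularLocal (A : Type*) [CommRing A] : Prop :=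
  IsNoetherianRing A ∧ ∃ h : IsLocalRing A, ∃ s : Finset A,
    Ideal.span (s : Set A) = @IsLocalRing.maximalIdeal A _ h ∧
    (s.card : WithBot (WithTop ℕ)) = ringKrullDim A

/-- A regular domain: an integral domain whose localization at every prime is regular local. -/
def IsRegularDomain (A : Type*) [CommRing A] : Prop :=
  IsDomain A ∧ ∀ (P : Ideal A) (hP : P.IsPrime), IsRegularLocal (@Localization.AtPrime A _ P hP)

/-- `x` is a regular sequence. -/
def IsRegSeq (x : Fin p → R) : Prop :=
  Ideal.span (Set.range x) ≠ ⊤ ∧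
  ∀ i : Fin p, ∀ r : R, r * x i ∈ Ideal.span (x '' {j | j < i}) →
    r ∈ Ideal.span (x '' {j | j < i})

/-- A generalized regular system of parameters: a permutable regular sequence all of whose
subquotients are regular domains. -/
def IsGRSOP (x : Fin p → R) : Prop :=
  (∀ σ : Equiv.Perm (Fin p), IsRegSeq (x ∘ σ)) ∧
  ∀ S : Set (Fin p), IsRegularDomain (R ⧸ Ideal.span (x '' S))

/-- `A` is the exponent set of a monomial representation of `f`:
`h * f = ∑_{a ∈ A} r a * x^a` with `h` and the `r a` outside `(x_1, …, x_p)`. -/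
def IsMonRep (x : Fin p → R) (f : R) (A : Finset (Fin p → ℕ)) : Prop :=
  ∃ (h : R) (r : (Fin p → ℕ) → R),
    h ∉ Ideal.span (Set.range x) ∧ (∀ a ∈ A, r a ∉ Ideal.span (Set.range x)) ∧
    h * f = ∑ a ∈ A, r a * mono x a

/-- A minimal (irredundant) monomial representation: no monomial divides another. -/
def IsMinMonRep (x : Fin p → R) (f : R) (A : Finset (Fin p → ℕ)) : Prop :=
  IsMonRep x f A ∧ ∀ a ∈ A, ∀ b ∈ A, a ≠ b → ¬ mono x a ∣ mono x b

open Classical in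
/-- The support of `f`: the exponent set of its (unique) minimal monomial representation. -/
def supp (x : Fin p → R) (f : R) : Set (Fin p → ℕ) :=
  if h : ∃ A : Finset (Fin p → ℕ), IsMinMonRep x f A then ↑h.choose else ∅

/-- Embedding of exponent vectors into `ℝ^p`. -/
def toR (a : Fin p → ℕ) : Fin p → ℝ := fun i => (a i : ℝ)

/-- The Newton polyhedron of a set of ring elements. -/
def Γ (x : Fin p → R) (S : Set R) : Set (Fin p → ℝ) :=
  convexHull ℝ (toR '' ⋃ f ∈ S, supp x f)

/-- The Newton polyhedron `Γ_x(I)` of an ideal. -/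
def ΓI (x : Fin p → R) (I : Ideal R) : Set (Fin p → ℝ) := Γ x (I : Set R)

/-- The Newton polyhedron `Γ_x(f)` of an element: that of the principal ideal `(f)`. -/
def ΓE (x : Fin p → R) (f : R) : Set (Fin p → ℝ) := ΓI x (Ideal.span {f})

/-- The integral closure of an ideal `I`: elements satisfying an equation of integral
dependence `f^n + a_1 f^{n-1} + ⋯ + a_n = 0` with `a_i ∈ I^i`. -/
def intClosure (I : Ideal R) : Set R :=
  {f | ∃ n : ℕ, 0 < n ∧ ∃ a : ℕ → R, (∀ i ∈ Finset.Icc 1 n, a i ∈ I ^ i) ∧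
    f ^ n + ∑ i ∈ Finset.Icc 1 n, a i * f ^ (n - i) = 0}

/-- The monomial ideal `I_0` spanned by the lattice points of `Γ_x(I)`. -/
def idealZero (x : Fin p → R) (I : Ideal R) : Ideal R :=
  Ideal.span (mono x '' {a | toR a ∈ ΓI x I})

/-- The ideal `K_I` generated by the monomials lying in the integral closure of `I`. -/
def KIdeal (x : Fin p → R) (I : Ideal R) : Ideal R :=
  Ideal.span {m | (∃ a : Fin p → ℕ, m = mono x a) ∧ m ∈ intClosure I}

/-! ### Monomials -/

lemma mono_add (x : Fin p → R) (a b : Fin p → ℕ) : mono x (a + b) = mono x a * mono x b := by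
  simp [mono, pow_add, Finset.prod_mul_distrib]

lemma mono_smul (x : Fin p → R) (n : ℕ) (a : Fin p → ℕ) : mono x (n • a) = mono x a ^ n := by
  simp [mono, ← Finset.prod_pow, ← pow_mul, mul_comm]

lemma mono_zero (x : Fin p → R) : mono x 0 = 1 := by simp [mono]

lemma mono_single (x : Fin p → R) (i : Fin p) : mono x (Pi.single i 1) = x i := by
  unfold mono
  rw [Finset.prod_eq_single i]
  · simp
  · intro b _ hb; simp [hb]
  · simp

lemma mono_sum {ι : Type*} (x : Fin p → R) (t : Finset ι) (u : ι → Fin p → ℕ) :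
    mono x (∑ j ∈ t, u j) = ∏ j ∈ t, mono x (u j) := by
  classical
  induction t using Finset.induction_on with
  | empty => simp [mono_zero]
  | insert j t hj ih => rw [Finset.sum_insert hj, Finset.prod_insert hj, mono_add, ih]

lemma mono_dvd (x : Fin p → R) {a b : Fin p → ℕ} (h : a ≤ b) : mono x a ∣ mono x b := by
  refine ⟨mono x (b - a), ?_⟩
  rw [← mono_add, add_tsub_cancel_of_le h]

/-- The ideal of monomials whose exponent is not below `c`. -/
def NI (x : Fin p → R) (c : Fin p → ℕ) : Ideal R := Ideal.span (mono x '' {b | ¬ b ≤ c})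

lemma mono_mem_NI (x : Fin p → R) {b c : Fin p → ℕ} (h : ¬ b ≤ c) : mono x b ∈ NI x c :=
  Ideal.subset_span ⟨b, h, rfl⟩

/-! ### Regular sequences -/

lemma prime_span (x : Fin p → R) (hx : IsGRSOP x) (S : Set (Fin p)) :
    (Ideal.span (x '' S)).IsPrime := by
  have := (hx.2 S).1
  exact (Ideal.Quotient.isDomain_iff_prime _).1 this

lemma not_mem_span (x : Fin p → R) (hx : IsGRSOP x) (S : Set (Fin p)) (i : Fin p) (hi : i ∉ S) :
    x i ∉ Ideal.span (x '' S) := by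
  intro h
  cases p with
  | zero => exact i.elim0
  | succ q =>
    have h1 := (hx.1 (Equiv.swap i (Fin.last q)))
    have h2 := h1.2 (Fin.last q) 1
    have hsub : x '' S ⊆ (x ∘ Equiv.swap i (Fin.last q)) '' {j | j < Fin.last q} := by
      rintro _ ⟨j, hj, rfl⟩
      refine ⟨Equiv.swap i (Fin.last q) j, ?_, by simp⟩
      have hji : j ≠ i := fun e => hi (e ▸ hj)
      refine lt_of_le_of_ne (Fin.le_last _) ?_
      intro e
      apply hji
      have := congrArg (Equiv.swap i (Fin.last q)) e
      simpa using this
    have h3 := h2 (by simpa using Ideal.span_mono hsub h)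
    apply h1.1
    rw [Ideal.eq_top_iff_one]
    exact Ideal.span_mono (Set.image_subset_range _ _) h3

/-- the ideal `(x_i : i ∈ S) + (x_j ^ n_j : j ∈ T)` -/
def PI (x : Fin p → R) (S : Set (Fin p)) (T : Finset (Fin p)) (n : Fin p → ℕ) : Ideal R :=
  Ideal.span (x '' S) ⊔ Ideal.span ((fun j => x j ^ n j) '' (T : Set (Fin p)))

lemma PI_insert (x : Fin p → R) (S : Set (Fin p)) (T : Finset (Fin p)) (n : Fin p → ℕ)
    (j : Fin p) : PI x S (insert j T) n = PI x S T n ⊔ Ideal.span {x j ^ n j} := by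
  unfold PI
  rw [Finset.coe_insert, Set.image_insert_eq, Ideal.span_insert, sup_assoc,
    sup_comm (Ideal.span {x j ^ n j})]

lemma PI_insert' (x : Fin p → R) (S : Set (Fin p)) (T : Finset (Fin p)) (n : Fin p → ℕ)
    (j : Fin p) : PI x (insert j S) T n = PI x S T n ⊔ Ideal.span {x j} := by
  unfold PI
  rw [Set.image_insert_eq, Ideal.span_insert, sup_assoc, sup_comm (Ideal.span {x j})]

lemma mem_sup_single {K : Ideal R} {y r : R} :
    r ∈ K ⊔ Ideal.span {y} ↔ ∃ s, r - s * y ∈ K := by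
  rw [Submodule.mem_sup]
  constructor
  · rintro ⟨k, hk, z, hz, rfl⟩
    obtain ⟨s, rfl⟩ := Ideal.mem_span_singleton'.1 hz
    exact ⟨s, by simpa using hk⟩
  · rintro ⟨s, hs⟩
    exact ⟨_, hs, s * y, Ideal.mem_span_singleton'.2 ⟨s, rfl⟩, by ring⟩

lemma nzd_PI (x : Fin p → R) (hx : IsGRSOP x) (n : Fin p → ℕ) (T : Finset (Fin p)) :
    ∀ (S : Set (Fin p)), (∀ j ∈ T, j ∉ S) → ∀ i, i ∉ S → i ∉ T → ∀ r, r * x i ∈ PI x S T n →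
      r ∈ PI x S T n := by
  classical
  induction T using Finset.induction_on with
  | empty =>
    intro S _ i hi _ r hr
    have : PI x S ∅ n = Ideal.span (x '' S) := by simp [PI]
    rw [this] at hr ⊢
    exact ((prime_span x hx S).mem_or_mem hr).resolve_right (not_mem_span x hx S i hi)
  | insert j T hj ih =>
    intro S hS i hiS hiT
    have hjS : j ∉ S := hS j (Finset.mem_insert_self _ _)
    have hij : i ≠ j := fun e => hiT (e ▸ Finset.mem_insert_self _ _)
    have hiT' : i ∉ T := fun e => hiT (Finset.mem_insert_of_mem e)
    have hS' : ∀ k ∈ T, k ∉ S := fun k hk => hS k (Finset.mem_insert_of_mem hk)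
    have A1 := ih S hS' j hjS hj
    have A2 := ih (insert j S) (by
      intro k hk hk'
      rcases hk' with rfl | hk'
      · exact hj hk
      · exact hS' k hk hk') i (by
        rintro (h | h)
        · exact hij h
        · exact hiS h) hiT'
    rw [PI_insert'] at A2
    rw [PI_insert]
    generalize n j = N
    generalize PI x S T n = K at A1 A2
    induction N with
    | zero => intro r _; simp [Ideal.span_singleton_one]
    | succ N ihN =>
      intro r hr
      obtain ⟨t, ht⟩ := mem_sup_single.1 hr
      have h1 : r ∈ K ⊔ Ideal.span {x j} := by
        apply A2
        refine mem_sup_single.2 ⟨t * x j ^ N, ?_⟩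
        convert ht using 1
        ring
      obtain ⟨s, hs⟩ := mem_sup_single.1 h1
      have h2 : s * x i ∈ K ⊔ Ideal.span {x j ^ N} := by
        refine mem_sup_single.2 ⟨t, A1 _ ?_⟩
        have := K.sub_mem ht (K.mul_mem_right (x i) hs)
        convert this using 1
        ring
      obtain ⟨u, hu⟩ := mem_sup_single.1 (ihN s h2)
      refine mem_sup_single.2 ⟨u, ?_⟩
      have := K.add_mem hs (K.mul_mem_right (x j) hu)
      convert this using 1
      ring

lemma colon_PI (x : Fin p → R) (hx : IsGRSOP x) (c : Fin p → ℕ) (T : Finset (Fin p)) :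
    ∀ (S : Set (Fin p)), (∀ j ∈ T, j ∉ S) → ∀ r,
      r * ∏ i ∈ T, x i ^ c i ∈ PI x S T (fun i => c i + 1) → r ∈ Ideal.span (Set.range x) := by
  classical
  induction T using Finset.induction_on with
  | empty =>
    intro S _ r hr
    have : PI x S ∅ (fun i => c i + 1) = Ideal.span (x '' S) := by simp [PI]
    rw [this] at hr
    exact Ideal.span_mono (Set.image_subset_range _ _) (by simpa using hr)
  | insert j T hj ih =>
    intro S hS r hr
    have hjS : j ∉ S := hS j (Finset.mem_insert_self _ _)
    have hS' : ∀ k ∈ T, k ∉ S := fun k hk => hS k (Finset.mem_insert_of_mem hk)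
    have A1 := nzd_PI x hx (fun i => c i + 1) T S hS' j hjS hj
    apply ih (insert j S) (by
      intro k hk hk'
      rcases hk' with rfl | hk'
      · exact hj hk
      · exact hS' k hk hk')
    rw [PI_insert'] 
    rw [PI_insert, Finset.prod_insert hj] at hr
    obtain ⟨t, ht⟩ := mem_sup_single.1 hr
    refine mem_sup_single.2 ⟨t, ?_⟩
    have A3 : ∀ N r, r * x j ^ N ∈ PI x S T (fun i => c i + 1) →
        r ∈ PI x S T (fun i => c i + 1) := by
      intro N
      induction N with
      | zero => intro r hr; simpa using hr
      | succ N ihN => intro r hr; exact ihN _ (A1 _ (by rwa [mul_assoc, ← pow_succ]))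
    apply A3 (c j)
    convert ht using 1
    ring

lemma colon_NI (x : Fin p → R) (hx : IsGRSOP x) (c : Fin p → ℕ) (r : R)
    (hr : r * mono x c ∈ NI x c) : r ∈ Ideal.span (Set.range x) := by
  refine colon_PI x hx c Finset.univ ∅ (by simp) r ?_
  refine (?_ : NI x c ≤ _) hr
  unfold NI
  rw [Ideal.span_le]
  rintro _ ⟨b, hb, rfl⟩
  obtain ⟨i, hi⟩ : ∃ i, c i < b i := by
    simpa [Pi.le_def] using hb
  refine Ideal.mem_of_dvd _ (a := x i ^ (c i + 1)) ?_ ?_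
  · exact (pow_dvd_pow _ hi).trans (Finset.dvd_prod_of_mem (fun i => x i ^ b i) (Finset.mem_univ i))
  · exact Ideal.mem_sup_right (Ideal.subset_span ⟨i, by simp, rfl⟩)

lemma prime_m (x : Fin p → R) (hx : IsGRSOP x) : (Ideal.span (Set.range x)).IsPrime := by
  simpa using prime_span x hx Set.univ

lemma mono_dvd_iff (x : Fin p → R) (hx : IsGRSOP x) {a b : Fin p → ℕ} :
    mono x a ∣ mono x b ↔ a ≤ b := by
  refine ⟨fun h => ?_, mono_dvd x⟩
  by_contra hab
  have := colon_NI x hx b 1 (by simpa using Ideal.mem_of_dvd _ h (mono_mem_NI x hab))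
  exact (prime_m x hx).ne_top ((Ideal.eq_top_iff_one _).2 this)

/-- key lemma on membership in monomial ideals -/
lemma key_mem (x : Fin p → R) (hx : IsGRSOP x) {A : Finset (Fin p → ℕ)} {r : (Fin p → ℕ) → R}
    (hA : ∀ a ∈ A, ∀ b ∈ A, a ≠ b → ¬ a ≤ b) (hr : ∀ a ∈ A, r a ∉ Ideal.span (Set.range x))
    {B : Set (Fin p → ℕ)} (h : ∑ a ∈ A, r a * mono x a ∈ Ideal.span (mono x '' B))
    {a : Fin p → ℕ} (ha : a ∈ A) : ∃ b ∈ B, b ≤ a := by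
  classical
  by_contra! hB
  apply hr a ha
  apply colon_NI x hx a
  have h1 : ∑ a ∈ A, r a * mono x a ∈ NI x a := by
    refine Ideal.span_mono (Set.image_mono ?_) h
    exact hB
  rw [← Finset.add_sum_erase _ _ ha] at h1
  refine (Ideal.add_mem_iff_left _ ?_).1 h1
  refine Ideal.sum_mem _ fun b hb => Ideal.mul_mem_left _ _ (mono_mem_NI x ?_)
  rw [Finset.mem_erase] at hb
  exact hA b hb.2 a ha hb.1

lemma minrep_unique (x : Fin p → R) (hx : IsGRSOP x) {f : R} {A B : Finset (Fin p → ℕ)}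
    (hA : IsMinMonRep x f A) (hB : IsMinMonRep x f B) : A ⊆ B := by
  have hm := prime_m x hx
  have key : ∀ A B : Finset (Fin p → ℕ), IsMinMonRep x f A → IsMinMonRep x f B →
      ∀ a ∈ A, ∃ b ∈ B, b ≤ a := by
    rintro A B ⟨⟨h, r, hh, hr, e⟩, hA⟩ ⟨⟨h', r', hh', hr', e'⟩, hB⟩ a ha
    refine key_mem x hx (A := A) (B := (B : Set _)) (r := fun a => h' * r a) ?_ ?_ ?_ ha
    · intro a ha b hb hab; rw [← mono_dvd_iff x hx]; exact hA a ha b hb hab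
    · intro a ha h0; exact (hm.mem_or_mem h0).elim hh' (hr a ha)
    · have : ∑ a ∈ A, h' * r a * mono x a = h * ∑ a ∈ B, r' a * mono x a := by
        rw [← e']
        simp only [mul_assoc, ← Finset.mul_sum]
        rw [← e]; ring
      rw [this]
      exact Ideal.mul_mem_left _ _ (Ideal.sum_mem _ fun b hb => Ideal.mul_mem_left _ _
        (Ideal.subset_span ⟨b, hb, rfl⟩))
  intro a ha
  obtain ⟨b, hb, hba⟩ := key A B hA hB a ha
  obtain ⟨c, hc, hcb⟩ := key B A hB hA b hb
  have : c = a := by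
    by_contra hca
    exact hA.2 c hc a ha hca (mono_dvd x (hcb.trans hba))
  subst this
  rwa [le_antisymm hcb hba]

lemma supp_eq (x : Fin p → R) (hx : IsGRSOP x) {f : R} {A : Finset (Fin p → ℕ)}
    (hA : IsMinMonRep x f A) : supp x f = A := by
  have h : ∃ A : Finset (Fin p → ℕ), IsMinMonRep x f A := ⟨A, hA⟩
  unfold supp
  rw [dif_pos h]
  rw [(minrep_unique x hx h.choose_spec hA).antisymm (minrep_unique x hx hA h.choose_spec)]

/-- saturation with respect to the complement of the prime `m` -/
def sat (m : Ideal R) (hm : m.IsPrime) (K : Ideal R) : Ideal R where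
  carrier := {f | ∃ h, h ∉ m ∧ h * f ∈ K}
  zero_mem' := ⟨1, (Ideal.ne_top_iff_one _).1 hm.ne_top, by simp⟩
  add_mem' := by
    rintro a b ⟨h, hh, ha⟩ ⟨g, hg, hb⟩
    refine ⟨h * g, fun e => (hm.mem_or_mem e).elim hh hg, ?_⟩
    have := K.add_mem (K.mul_mem_left g ha) (K.mul_mem_left h hb)
    convert this using 1; ring
  smul_mem' := by
    rintro c a ⟨h, hh, ha⟩
    refine ⟨h, hh, ?_⟩
    have := K.mul_mem_left c ha
    convert this using 1
    simp only [smul_eq_mul]; ring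

lemma mem_sat {m : Ideal R} {hm : m.IsPrime} {K : Ideal R} {f : R} :
    f ∈ sat m hm K ↔ ∃ h, h ∉ m ∧ h * f ∈ K := Iff.rfl

lemma sat_mono {m : Ideal R} {hm : m.IsPrime} {K L : Ideal R} (h : K ≤ L) :
    sat m hm K ≤ sat m hm L := fun _ ⟨g, hg, hk⟩ => ⟨g, hg, h hk⟩

lemma le_sat {m : Ideal R} {hm : m.IsPrime} {K : Ideal R} :
    K ≤ sat m hm K := fun _ hk => ⟨1, (Ideal.ne_top_iff_one _).1 hm.ne_top, by simpa using hk⟩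

lemma sat_mul {m : Ideal R} {hm : m.IsPrime} {K L : Ideal R} :
    sat m hm K * sat m hm L ≤ sat m hm (K * L) := by
  rw [Ideal.mul_le]
  rintro a ⟨g, hg, ha⟩ b ⟨h, hh, hb⟩
  refine ⟨g * h, fun e => (hm.mem_or_mem e).elim hg hh, ?_⟩
  have := Ideal.mul_mem_mul ha hb
  convert this using 1; ring

lemma sat_pow {m : Ideal R} {hm : m.IsPrime} {K : Ideal R} (n : ℕ) :
    sat m hm K ^ n ≤ sat m hm (K ^ n) := by
  induction n with
  | zero => rw [pow_zero, pow_zero]; exact le_sat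
  | succ n ih => rw [pow_succ, pow_succ]; exact (Ideal.mul_mono_left ih).trans sat_mul

/-! ### Existence of minimal representations -/

lemma krull_aux {S : Type*} [CommRing S] [IsNoetherianRing S] [IsLocalRing S] (K : Ideal S) (f : S)
    (h : ∀ N, f ∈ K ⊔ IsLocalRing.maximalIdeal S ^ N) : f ∈ K := by
  have h0 := Ideal.iInf_pow_smul_eq_bot_of_isLocalRing (M := S ⧸ K) (IsLocalRing.maximalIdeal S)
    Ideal.IsPrime.ne_top'
  rw [← Ideal.Quotient.eq_zero_iff_mem]
  have : (Ideal.Quotient.mk K f) ∈ (⊥ : Submodule S (S ⧸ K)) := by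
    rw [← h0, Submodule.mem_iInf]
    intro N
    obtain ⟨k, hk, g, hg, rfl⟩ := Submodule.mem_sup.1 (h N)
    have e : Ideal.Quotient.mk K (k + g) = g • (1 : S ⧸ K) := by
      rw [map_add, Ideal.Quotient.eq_zero_iff_mem.2 hk, zero_add]
      rw [Algebra.smul_def, mul_one]; rfl
    rw [e]
    exact Submodule.smul_mem_smul hg trivial
  simpa using this

lemma krull_sat [IsDomain R] (m : Ideal R) (hm : m.IsPrime)
    (hN : IsNoetherianRing (Localization.AtPrime m)) (K : Ideal R) (f : R)
    (h : ∀ N, f ∈ K ⊔ m ^ N) : ∃ h, h ∉ m ∧ h * f ∈ K := by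
  have h1 : algebraMap R (Localization.AtPrime m) f ∈ K.map (algebraMap R (Localization.AtPrime m)) := by
    apply krull_aux
    intro N
    have := Ideal.mem_map_of_mem (algebraMap R (Localization.AtPrime m)) (h N)
    rwa [Ideal.map_sup, Ideal.map_pow, Localization.AtPrime.map_eq_maximalIdeal] at this
  rw [IsLocalization.mem_map_algebraMap_iff m.primeCompl] at h1
  obtain ⟨⟨a, s⟩, e⟩ := h1
  refine ⟨s, s.2, ?_⟩
  rw [← map_mul] at e
  have := IsLocalization.injective (Localization.AtPrime m) m.primeCompl_le_nonZeroDivisors e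
  rw [mul_comm, this]
  exact a.2

/-- Representation of an element of a monomial ideal. -/
lemma exists_rep (x : Fin p → R) {B : Set (Fin p → ℕ)} {f : R} (h : f ∈ Ideal.span (mono x '' B)) :
    ∃ (A : Finset (Fin p → ℕ)) (r : (Fin p → ℕ) → R), (∀ a ∈ A, a ∈ B) ∧
      f = ∑ a ∈ A, r a * mono x a := by
  obtain ⟨l, hl, e⟩ := (Finsupp.mem_span_image_iff_linearCombination R).1 h
  refine ⟨l.support, l, fun a ha => hl ha, ?_⟩
  rw [← e, Finsupp.linearCombination_apply, Finsupp.sum]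
  simp

/-- exponents not avoidable for `f` -/
def B0 (x : Fin p → R) (f : R) : Set (Fin p → ℕ) :=
  {c | ∀ h, h ∉ Ideal.span (Set.range x) → h * f ∉ NI x c}

lemma NI_anti (x : Fin p → R) {b c : Fin p → ℕ} (h : b ≤ c) : NI x c ≤ NI x b :=
  Ideal.span_mono (Set.image_mono fun _ ha hb => ha (hb.trans h))

lemma B0_up (x : Fin p → R) {f : R} {b c : Fin p → ℕ} (hb : b ∈ B0 x f) (h : b ≤ c) :
    c ∈ B0 x f := fun g hg hf => hb g hg (NI_anti x h hf)

def MI (x : Fin p → R) (N : ℕ) : Ideal R := Ideal.span (mono x '' {c | ∑ i, c i = N})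

lemma MI_zero (x : Fin p → R) : MI x 0 = ⊤ := by
  rw [Ideal.eq_top_iff_one]
  exact Ideal.subset_span ⟨0, by simp, mono_zero x⟩

lemma mul_mem_MI (x : Fin p → R) {s : R} (hs : s ∈ Ideal.span (Set.range x)) (c : Fin p → ℕ) :
    s * mono x c ∈ MI x (∑ i, c i + 1) := by
  have : Ideal.span (Set.range x) * Ideal.span {mono x c} ≤ MI x (∑ i, c i + 1) := by
    rw [Ideal.span_mul_span', Ideal.span_le]
    rintro _ ⟨_, ⟨i, rfl⟩, _, rfl, rfl⟩
    refine Ideal.subset_span ⟨Pi.single i 1 + c, ?_, ?_⟩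
    · simp [Finset.sum_add_distrib, add_comm]
    · simp [mono_add, mono_single]
  exact this (Ideal.mul_mem_mul hs (Ideal.mem_span_singleton_self _))

lemma mul_mem_NI (x : Fin p → R) {s : R} (hs : s ∈ Ideal.span (Set.range x)) (c : Fin p → ℕ) :
    s * mono x c ∈ NI x c := by
  refine (Ideal.span_mono (Set.image_mono ?_) : MI x _ ≤ NI x c) (mul_mem_MI x hs c)
  intro b hb hbc
  have : ∑ i, b i ≤ ∑ i, c i := Finset.sum_le_sum fun i _ => hbc i
  simp only [Set.mem_ofPred_eq] at hb
  omega

lemma MI_le (x : Fin p → R) (N : ℕ) : MI x N ≤ Ideal.span (Set.range x) ^ N := by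
  unfold MI
  rw [Ideal.span_le]
  rintro _ ⟨c, rfl, rfl⟩
  rw [← Finset.prod_pow_eq_pow_sum]
  exact Ideal.prod_mem_prod fun i _ => Ideal.pow_mem_pow (Ideal.subset_span (Set.mem_range_self i)) _

lemma mem_B0_sup (x : Fin p → R) (hx : IsGRSOP x) (f : R) (N : ℕ) :
    f ∈ Ideal.span (mono x '' B0 x f) ⊔ MI x N := by
  classical
  have hm := prime_m x hx
  induction N with
  | zero => simp [MI_zero]
  | succ N ih =>
    obtain ⟨k, hk, g, hg, e⟩ := Submodule.mem_sup.1 ih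
    obtain ⟨A, s, hA, rfl⟩ := exists_rep x hg
    have key : ∀ K : Ideal R, k + ∑ a ∈ A, s a * mono x a ∈ K → f ∈ K := fun K h => e ▸ h
    apply key
    refine Ideal.add_mem _ (Ideal.mem_sup_left hk) (Ideal.sum_mem _ fun c hc => ?_)
    by_cases hs : s c ∈ Ideal.span (Set.range x)
    · apply Ideal.mem_sup_right
      have := mul_mem_MI x hs c
      rwa [hA c hc] at this
    · apply Ideal.mem_sup_left
      apply Ideal.mul_mem_left
      refine Ideal.subset_span ⟨c, ?_, rfl⟩
      by_contra hcB
      have hcB' := hcB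
      simp only [B0, Set.mem_ofPred_eq, not_forall, not_not] at hcB
      obtain ⟨h, hh, hf⟩ := hcB
      have h1 : h * s c * mono x c ∈ NI x c := by
        rw [← e, ← Finset.add_sum_erase _ _ hc, mul_add, mul_add] at hf
        have hk' : h * k ∈ NI x c := by
          apply Ideal.mul_mem_left
          exact Ideal.span_mono (Set.image_mono fun b hb hbc => hcB' (B0_up x hb hbc)) hk
        rw [Ideal.add_mem_iff_right _ hk'] at hf
        rw [mul_assoc]
        refine (Ideal.add_mem_iff_left _ ?_).1 hf
        apply Ideal.mul_mem_left
        refine Ideal.sum_mem _ fun b hb => Ideal.mul_mem_left _ _ (mono_mem_NI x ?_)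
        rw [Finset.mem_erase] at hb
        intro hbc
        apply hb.1
        have e1 : ∑ i, b i = ∑ i, c i := (hA b hb.2).trans (hA c hc).symm
        funext i
        exact (Finset.sum_eq_sum_iff_of_le fun i _ => hbc i).1 e1 i (Finset.mem_univ i)
      exact (hm.mem_or_mem (colon_NI x hx c _ h1)).elim hh hs

lemma exists_minrep (x : Fin p → R) (hR : IsRegularDomain R) (hx : IsGRSOP x) (f : R) :
    ∃ A, IsMinMonRep x f A := by
  classical
  have hm := prime_m x hx
  have := hR.1
  obtain ⟨h, hh, hf⟩ := krull_sat _ hm (hR.2 _ hm).1 (Ideal.span (mono x '' B0 x f)) f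
    (fun N => sup_le_sup_left (MI_le x N) _ (mem_B0_sup x hx f N))
  set M := {a | Minimal (· ∈ B0 x f) a} with hM
  have hanti : IsAntichain (· ≤ ·) M := setOfPred_minimal_antichain _
  have hfin : M.Finite := hanti.finite_of_partiallyWellOrderedOn
    (Set.isPWO_of_wellQuasiOrderedLE M)
  have hf' : h * f ∈ Ideal.span (mono x '' M) := by
    refine (Ideal.span_le.2 ?_ : Ideal.span (mono x '' B0 x f) ≤ _) hf
    rintro _ ⟨b, hb, rfl⟩
    obtain ⟨a, hab, ha⟩ := exists_minimal_le_of_wellFoundedLT (· ∈ B0 x f) b hb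
    exact Ideal.mem_of_dvd _ (mono_dvd x hab) (Ideal.subset_span ⟨a, ha, rfl⟩)
  obtain ⟨A, r, hA, e⟩ := exists_rep x hf'
  have hne : ∀ a ∈ A, ∀ b ∈ A, a ≠ b → ¬ a ≤ b := fun a ha b hb hab =>
    hanti (hA a ha) (hA b hb) hab
  refine ⟨A, ⟨h, r, hh, ?_, e⟩, ?_⟩
  · intro a ha hra
    apply (hA a ha).prop h hh
    rw [e]
    refine Ideal.sum_mem _ fun b hb => ?_
    by_cases hab : b = a
    · subst hab; exact mul_mem_NI x hra b
    · exact Ideal.mul_mem_left _ _ (mono_mem_NI x (hne b hb a ha hab))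
  · intro a ha b hb hab
    rw [mono_dvd_iff x hx]
    exact hne a ha b hb hab

/-- The exponent set of an ideal. -/
def SI (x : Fin p → R) (I : Ideal R) : Set (Fin p → ℕ) := ⋃ f ∈ (I : Set R), supp x f

lemma SI_add (x : Fin p → R) (hR : IsRegularDomain R) (hx : IsGRSOP x) (I : Ideal R)
    {a : Fin p → ℕ} (ha : a ∈ SI x I) (d : Fin p → ℕ) : a + d ∈ SI x I := by
  classical
  simp only [SI, Set.mem_iUnion] at ha ⊢
  obtain ⟨f, hf, ha⟩ := ha
  obtain ⟨A, hA⟩ := exists_minrep x hR hx f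
  rw [supp_eq x hx hA] at ha
  refine ⟨mono x d * f, I.mul_mem_left _ hf, ?_⟩
  have : IsMinMonRep x (mono x d * f) (A.map (addRightEmbedding d)) := by
    obtain ⟨⟨h, r, hh, hr, e⟩, hA⟩ := hA
    refine ⟨⟨h, fun c => r (c - d), hh, ?_, ?_⟩, ?_⟩
    · intro c hc
      obtain ⟨a, ha, rfl⟩ := Finset.mem_map.1 hc
      simpa using hr a ha
    · rw [mul_left_comm, e, Finset.mul_sum, Finset.sum_map]
      refine Finset.sum_congr rfl fun a _ => ?_
      simp [mono_add]; ring
    · intro c hc c' hc' hcc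
      obtain ⟨a, ha, rfl⟩ := Finset.mem_map.1 hc
      obtain ⟨a', ha', rfl⟩ := Finset.mem_map.1 hc'
      have := hA a ha a' ha' (fun e => hcc (by rw [e]))
      rw [mono_dvd_iff x hx] at this ⊢
      simpa using this
  rw [supp_eq x hx this]
  simpa using ha

lemma le_sat_SI (x : Fin p → R) (hR : IsRegularDomain R) (hx : IsGRSOP x) (I : Ideal R) :
    I ≤ sat _ (prime_m x hx) (Ideal.span (mono x '' SI x I)) := by
  intro f hf
  obtain ⟨A, hA⟩ := exists_minrep x hR hx f
  obtain ⟨h, r, hh, hr, e⟩ := hA.1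
  refine ⟨h, hh, ?_⟩
  rw [e]
  refine Ideal.sum_mem _ fun a ha => Ideal.mul_mem_left _ _ (Ideal.subset_span ⟨a, ?_, rfl⟩)
  simp only [SI, Set.mem_iUnion]
  exact ⟨f, hf, by rw [supp_eq x hx hA]; exact ha⟩

lemma supp_ge (x : Fin p → R) (hR : IsRegularDomain R) (hx : IsGRSOP x) {f : R}
    {B : Set (Fin p → ℕ)} (hf : f ∈ Ideal.span (mono x '' B)) {a : Fin p → ℕ}
    (ha : a ∈ supp x f) : ∃ b ∈ B, b ≤ a := by
  obtain ⟨A, hA⟩ := exists_minrep x hR hx f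
  rw [supp_eq x hx hA] at ha
  obtain ⟨⟨h, r, hh, hr, e⟩, hA⟩ := hA
  refine key_mem x hx (A := A) (r := r) ?_ hr ?_ ha
  · intro a ha b hb hab; rw [← mono_dvd_iff x hx]; exact hA a ha b hb hab
  · rw [← e]; exact Ideal.mul_mem_left _ _ hf

/-! ### Integral closure through the Rees algebra -/

open Polynomial in
lemma isIntegral_of_mem (I : Ideal R) {f : R} (hf : f ∈ intClosure I) :
    IsIntegral (reesAlgebra I) (monomial 1 f : R[X]) := by
  nontriviality R
  obtain ⟨n, hn, a, ha, e⟩ := hf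
  classical
  let c : ℕ → reesAlgebra I := fun i =>
    if h : a i ∈ I ^ i then ⟨monomial i (a i), reesAlgebra.monomial_mem.2 h⟩ else 0
  have hc : ∀ i ∈ Finset.Icc 1 n, (c i : R[X]) = monomial i (a i) := by
    intro i hi; simp only [c, dif_pos (ha i hi)]
  refine ⟨X ^ n + ∑ i ∈ Finset.Icc 1 n, C (c i) * X ^ (n - i), ?_, ?_⟩
  · apply monic_X_pow_add
    refine (degree_sum_le _ _).trans_lt ?_
    rw [Finset.sup_lt_iff (by exact WithBot.bot_lt_coe n)]
    intro i hi
    rw [Finset.mem_Icc] at hi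
    refine (degree_C_mul_X_pow_le _ _).trans_lt ?_
    exact_mod_cast (by omega : n - i < n)
  · rw [eval₂_add, eval₂_finsetSum, eval₂_pow, eval₂_X]
    have : ∀ i ∈ Finset.Icc 1 n, eval₂ (algebraMap (reesAlgebra I) R[X]) (monomial 1 f)
        (C (c i) * X ^ (n - i)) = monomial n (a i * f ^ (n - i)) := by
      intro i hi
      rw [eval₂_mul, eval₂_C, eval₂_pow, eval₂_X]
      have : algebraMap (reesAlgebra I) R[X] (c i) = monomial i (a i) := hc i hi
      rw [this, monomial_pow, monomial_mul_monomial]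
      rw [Finset.mem_Icc] at hi
      rw [show i + 1 * (n - i) = n by omega]
    rw [Finset.sum_congr rfl this, monomial_pow, one_mul, ← map_sum, ← map_add, e, map_zero]

open Polynomial in
lemma mem_of_isIntegral (I : Ideal R) {f : R}
    (hf : IsIntegral (reesAlgebra I) (monomial 1 f : R[X])) : f ∈ intClosure I := by
  obtain ⟨P, hP, e⟩ := hf
  by_cases hn : P.natDegree = 0
  · have h1 : P = 1 := hP.natDegree_eq_zero.1 hn
    rw [h1, eval₂_one] at e
    have : Subsingleton R := by
      have := congrArg (fun q : R[X] => q.coeff 0) e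
      simp at this
      exact subsingleton_of_zero_eq_one this.symm
    exact ⟨1, one_pos, 0, fun i _ => by simp, Subsingleton.elim _ _⟩
  · refine ⟨P.natDegree, Nat.pos_of_ne_zero hn,
      fun i => ((P.coeff (P.natDegree - i) : reesAlgebra I) : R[X]).coeff i, ?_, ?_⟩
    · intro i _
      exact (mem_reesAlgebra_iff I _).1 (P.coeff (P.natDegree - i)).2 i
    · have h2 := congrArg (fun q : R[X] => q.coeff P.natDegree) e
      simp only [eval₂_eq_sum_range, finsetSum_coeff, coeff_zero] at h2
      have h3 : ∀ k ∈ Finset.range (P.natDegree + 1),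
          (algebraMap (reesAlgebra I) R[X] (P.coeff k) * (monomial 1 f) ^ k).coeff P.natDegree
          = ((P.coeff k : reesAlgebra I) : R[X]).coeff (P.natDegree - k) * f ^ k := by
        intro k hk
        rw [Finset.mem_range] at hk
        have h4 : algebraMap (reesAlgebra I) R[X] (P.coeff k) = (P.coeff k : R[X]) := rfl
        rw [h4, monomial_pow, one_mul]
        obtain ⟨d, hd⟩ := Nat.exists_eq_add_of_le (Nat.lt_succ_iff.1 hk)
        rw [hd, add_comm, coeff_mul_monomial]
        simp
      rw [Finset.sum_congr rfl h3, ← Finset.sum_range_reflect, Finset.sum_range_succ'] at h2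
      simp only [Nat.add_sub_cancel, Nat.sub_zero, Nat.sub_self] at h2
      have h5 : ((P.coeff P.natDegree : reesAlgebra I) : R[X]) = 1 := by
        rw [hP.coeff_natDegree]; rfl
      rw [h5, coeff_one_zero, one_mul, add_comm] at h2
      rw [← h2]
      congr 1
      rw [← Finset.Ico_add_one_right_eq_Icc, Finset.sum_Ico_eq_sum_range]
      refine Finset.sum_congr (by simp) fun k hk => ?_
      rw [Finset.mem_range] at hk
      rw [show P.natDegree - (P.natDegree - (k + 1)) = 1 + k by omega, add_comm k 1]

lemma le_intClosure (I : Ideal R) {f : R} (hf : f ∈ I) : f ∈ intClosure I :=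
  ⟨1, one_pos, fun _ => -f, by simpa using hf, by simp⟩

lemma mem_intClosure_of_pow {ι : Type*} (I : Ideal R) (t : Finset ι) (g : ι → R) (N : ι → ℕ) {f : R}
    (hg : ∀ j ∈ t, g j ∈ intClosure I) (hN : 0 < ∑ j ∈ t, N j)
    (e : f ^ (∑ j ∈ t, N j) = ∏ j ∈ t, g j ^ N j) : f ∈ intClosure I := by
  apply mem_of_isIntegral
  apply IsIntegral.of_pow hN
  have : (Polynomial.monomial 1 f : Polynomial R) ^ (∑ j ∈ t, N j) =
      ∏ j ∈ t, (Polynomial.monomial 1 (g j)) ^ N j := by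
    simp only [← Polynomial.C_mul_X_eq_monomial, mul_pow, Finset.prod_mul_distrib,
      Finset.prod_pow_eq_pow_sum, ← map_pow, e, map_prod]
  rw [this]
  exact IsIntegral.prod _ fun j hj => (isIntegral_of_mem I (hg j hj)).pow _

/-! ### Convexity -/

lemma toR_add (a b : Fin p → ℕ) : toR (a + b) = toR a + toR b := by
  funext i; simp [toR]

lemma toR_smul (n : ℕ) (a : Fin p → ℕ) : toR (n • a) = (n : ℝ) • toR a := by
  funext i; simp [toR]

lemma toR_inj {a b : Fin p → ℕ} (h : toR a = toR b) : a = b := by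
  funext i; simpa [toR] using congrFun h i

lemma orthant (v : Fin p → ℝ) (hv : 0 ≤ v) : v ∈ convexHull ℝ (Set.range (toR (p := p))) := by
  have h1 : Set.range (toR (p := p)) = Set.pi Set.univ fun _ => Set.range (Nat.cast : ℕ → ℝ) := by
    ext w
    constructor
    · rintro ⟨a, rfl⟩ i _; exact ⟨a i, rfl⟩
    · intro h
      choose a ha using fun i => h i (Set.mem_univ i)
      exact ⟨a, funext ha⟩
  rw [h1, convexHull_pi]
  intro i _
  obtain ⟨n, hn⟩ := exists_nat_ge (v i)
  have : v i ∈ segment ℝ ((0 : ℕ) : ℝ) ((n : ℕ) : ℝ) := by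
    rw [segment_eq_Icc (by simp)]
    exact ⟨by simpa using hv i, hn⟩
  exact segment_subset_convexHull (Set.mem_range_self 0) (Set.mem_range_self n) this

lemma hull_up {S : Set (Fin p → ℕ)} (hS : ∀ a ∈ S, ∀ d, a + d ∈ S) {u v : Fin p → ℝ}
    (hu : u ∈ convexHull ℝ (toR '' S)) (huv : u ≤ v) : v ∈ convexHull ℝ (toR '' S) := by
  have h1 : toR '' S + Set.range (toR (p := p)) ⊆ toR '' S := by
    rintro _ ⟨_, ⟨a, ha, rfl⟩, _, ⟨d, rfl⟩, rfl⟩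
    exact ⟨a + d, hS a ha d, toR_add a d⟩
  apply convexHull_mono h1
  rw [convexHull_add]
  exact ⟨u, hu, v - u, orthant _ (sub_nonneg.2 huv), by simp⟩

/-- finitely many positive reals have a `ℚ`-linear functional which is positive on them -/
lemma exists_pos_functional {ι : Type*} (t : Finset ι) (w : ι → ℝ) :
    ∃ V : Submodule ℚ ℝ, (∀ i ∈ t, w i ∈ V) ∧ ∃ φ : V →ₗ[ℚ] ℚ,
      ∀ i ∈ t, ∀ h : w i ∈ V, 0 < w i → 0 < φ ⟨w i, h⟩ := by
  classical
  let V : Submodule ℚ ℝ := Submodule.span ℚ (w '' t)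
  have hfin : FiniteDimensional ℚ V :=
    FiniteDimensional.span_of_finite ℚ (t.finite_toSet.image w)
  have hV : ∀ i ∈ t, w i ∈ V := fun i hi => Submodule.subset_span ⟨i, hi, rfl⟩
  refine ⟨V, hV, ?_⟩
  let b := Module.finBasis ℚ V
  let F : V → (Fin (Module.finrank ℚ V) → ℝ) → ℝ := fun v q => ∑ k, (b.repr v k : ℝ) * q k
  have hF : ∀ v, Continuous (F v) := fun v => by
    simp only [F]; fun_prop
  have hFb : ∀ v : V, F v (fun k => (b k : ℝ)) = v := by
    intro v
    have h := congrArg (Subtype.val) (b.sum_repr v)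
    rw [Submodule.coe_sum] at h
    rw [← h]
    simp only [F, Submodule.coe_smul, Rat.smul_def]
  let U : Set (Fin (Module.finrank ℚ V) → ℝ) :=
    ⋂ i ∈ t.filter (fun i => 0 < w i), {q | ∀ h : w i ∈ V, 0 < F ⟨w i, h⟩ q}
  have hU : IsOpen U := by
    refine isOpen_biInter_finset fun i hi => ?_
    have hi' := hV i (Finset.mem_filter.1 hi).1
    have : {q | ∀ h : w i ∈ V, 0 < F ⟨w i, h⟩ q} = {q | 0 < F ⟨w i, hi'⟩ q} := by
      ext q; exact ⟨fun h => h hi', fun h _ => h⟩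
    rw [this]
    exact isOpen_lt continuous_const (hF _)
  have hne : U.Nonempty := by
    refine ⟨fun k => (b k : ℝ), ?_⟩
    simp only [U, Set.mem_iInter]
    intro i hi h
    rw [hFb]
    exact (Finset.mem_filter.1 hi).2
  have hd : DenseRange (Pi.map (fun (_ : Fin (Module.finrank ℚ V)) => ((↑) : ℚ → ℝ))) :=
    DenseRange.piMap fun _ => Rat.denseRange_cast
  obtain ⟨q, hq⟩ := hd.exists_mem_open hU hne
  refine ⟨b.constr ℚ q, ?_⟩
  intro i hi h hw
  have h1 := Set.mem_iInter₂.1 hq i (Finset.mem_filter.2 ⟨hi, hw⟩) h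
  rw [Module.Basis.constr_apply_fintype]
  simp only [F, Pi.map] at h1
  have : (0 : ℝ) < ((∑ k, b.equivFun ⟨w i, h⟩ k • q k : ℚ) : ℝ) := by
    push_cast
    simpa using h1
  exact_mod_cast this

lemma nat_combination {U : Set (Fin p → ℕ)} {a : Fin p → ℕ}
    (ha : toR a ∈ convexHull ℝ (toR '' U)) :
    ∃ (ι : Type) (t : Finset ι) (N : ι → ℕ) (u : ι → Fin p → ℕ), (∀ j ∈ t, u j ∈ U) ∧
      0 < ∑ j ∈ t, N j ∧ (∑ j ∈ t, N j) • a = ∑ j ∈ t, N j • u j := by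
  classical
  rw [convexHull_eq] at ha
  obtain ⟨ι, t, w, z, hw0, hw1, hz, hc⟩ := ha
  rw [Finset.centerMass_eq_of_sum_1 _ _ hw1] at hc
  choose! u hu using hz
  obtain ⟨V, hV, φ, hφ⟩ := exists_pos_functional t w
  let l : ι → ℚ := fun i => if h : w i ∈ V then φ ⟨w i, h⟩ else 0
  have hl0 : ∀ i ∈ t, 0 ≤ l i := by
    intro i hi
    simp only [l, dif_pos (hV i hi)]
    rcases (hw0 i hi).eq_or_lt with h | h
    · have : (⟨w i, hV i hi⟩ : V) = 0 := by ext; exact h.symm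
      rw [this, map_zero]
    · exact (hφ i hi _ h).le
  have hlpos : 0 < ∑ i ∈ t, l i := by
    obtain ⟨i, hi, hwi⟩ : ∃ i ∈ t, 0 < w i := by
      by_contra! h
      have := Finset.sum_nonpos h
      linarith
    refine Finset.sum_pos' hl0 ⟨i, hi, ?_⟩
    simp only [l, dif_pos (hV i hi)]
    exact hφ i hi _ hwi
  -- transfer of integral linear relations
  have hrel : ∀ c : ι → ℤ, ∑ i ∈ t, (c i : ℝ) * w i = 0 → ∑ i ∈ t, (c i : ℚ) * l i = 0 := by
    intro c h
    have h1 : ∑ i ∈ t.attach, (c i : ℚ) • (⟨w i, hV i i.2⟩ : V) = 0 := by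
      apply Subtype.ext
      rw [Submodule.coe_sum, Submodule.coe_zero, ← h, ← Finset.sum_attach t]
      simp only [Submodule.coe_smul, Rat.smul_def, Rat.cast_intCast]
    have h2 := congrArg φ h1
    rw [map_sum, map_zero] at h2
    rw [← Finset.sum_attach t, ← h2]
    refine Finset.sum_congr rfl fun i _ => ?_
    rw [map_smul, smul_eq_mul]
    simp only [l, dif_pos (hV i i.2)]
  have hlrel : ∀ k, ∑ i ∈ t, l i * (u i k : ℚ) = (∑ i ∈ t, l i) * a k := by
    intro k
    have h1 := hrel (fun i => (u i k : ℤ) - a k) (by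
      have := congrFun hc k
      simp only [Finset.sum_apply, Pi.smul_apply, smul_eq_mul] at this
      have h2 : ∑ i ∈ t, w i * z i k = ∑ i ∈ t, w i * (u i k : ℝ) :=
        Finset.sum_congr rfl fun i hi => by rw [← (hu i hi).2]; rfl
      rw [h2] at this
      push_cast
      simp only [sub_mul, Finset.sum_sub_distrib, ← Finset.mul_sum, hw1]
      simp only [mul_comm _ (w _), this]
      simp [toR])
    push_cast at h1
    simp only [sub_mul, Finset.sum_sub_distrib, ← Finset.mul_sum] at h1
    simp only [mul_comm (l _)]
    linarith
  -- clear denominators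
  let D : ℕ := ∏ i ∈ t, (l i).den
  have hD : 0 < D := Finset.prod_pos fun i _ => (l i).den_pos
  have hN : ∀ i ∈ t, ∃ n : ℕ, (n : ℚ) = D * l i := by
    intro i hi
    obtain ⟨e, he⟩ : (l i).den ∣ D := Finset.dvd_prod_of_mem (fun i => (l i).den) hi
    have hnum : 0 ≤ (l i).num := Rat.num_nonneg.2 (hl0 i hi)
    refine ⟨e * (l i).num.toNat, ?_⟩
    have h1 : ((l i).num.toNat : ℚ) = ((l i).num : ℚ) := by
      exact_mod_cast congrArg (Int.cast : ℤ → ℚ) (Int.toNat_of_nonneg hnum)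
    push_cast
    rw [h1, he, ← Rat.mul_den_eq_num]
    push_cast
    ring
  choose! N hN using hN
  have hsum : ((∑ j ∈ t, N j : ℕ) : ℚ) = D * ∑ i ∈ t, l i := by
    push_cast
    rw [Finset.mul_sum]
    exact Finset.sum_congr rfl hN
  refine ⟨ι, t, N, u, fun j hj => (hu j hj).1, ?_, ?_⟩
  · have : (0 : ℚ) < ((∑ j ∈ t, N j : ℕ) : ℚ) := by rw [hsum]; positivity
    exact_mod_cast this
  · funext k
    have : (((∑ j ∈ t, N j) • a) k : ℚ) = ((∑ j ∈ t, N j • u j) k : ℕ) := by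
      rw [Pi.smul_apply, smul_eq_mul, Nat.cast_mul, hsum, Finset.sum_apply, mul_assoc, ← hlrel k,
        Finset.mul_sum, Nat.cast_sum]
      refine Finset.sum_congr rfl fun i hi => ?_
      rw [Pi.smul_apply, smul_eq_mul, Nat.cast_mul, hN i hi]
      ring
    exact_mod_cast this

/-! ### The main theorem -/

lemma ΓI_eq (x : Fin p → R) (I : Ideal R) : ΓI x I = convexHull ℝ (toR '' SI x I) := rfl

lemma ΓI_up (x : Fin p → R) (hR : IsRegularDomain R) (hx : IsGRSOP x) (I : Ideal R)
    {u v : Fin p → ℝ} (hu : u ∈ ΓI x I) (huv : u ≤ v) : v ∈ ΓI x I := by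
  rw [ΓI_eq] at hu ⊢
  exact hull_up (fun a ha d => SI_add x hR hx I ha d) hu huv

/-- Monomials of the `i`-th power have exponents in `i • Γ`. -/
lemma pow_le_span (x : Fin p → R) (I : Ideal R) (i : ℕ) (hi : 1 ≤ i) :
    Ideal.span (mono x '' SI x I) ^ i ≤
      Ideal.span (mono x '' {b | ∃ u ∈ ΓI x I, toR b = (i : ℝ) • u}) := by
  induction i, hi using Nat.le_induction with
  | base =>
    rw [pow_one]
    refine Ideal.span_mono (Set.image_mono fun a ha => ⟨toR a, ?_, by simp⟩)
    exact subset_convexHull _ _ ⟨a, ha, rfl⟩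
  | succ i hi ih =>
    rw [pow_succ]
    refine (Ideal.mul_mono_left ih).trans ?_
    rw [Ideal.span_mul_span', Ideal.span_le]
    rintro _ ⟨_, ⟨b, ⟨u, hu, hb⟩, rfl⟩, _, ⟨a, ha, rfl⟩, rfl⟩
    refine Ideal.subset_span ⟨b + a, ?_, mono_add x b a⟩
    have ha' : toR a ∈ ΓI x I := subset_convexHull _ _ ⟨a, ha, rfl⟩
    have hc : Convex ℝ (ΓI x I) := convex_convexHull _ _
    have h0 : ((i : ℝ) + 1) ≠ 0 := by positivity
    refine ⟨((i : ℝ) / (i + 1)) • u + ((1 : ℝ) / (i + 1)) • toR a,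
      hc hu ha' (by positivity) (by positivity) (by field_simp), ?_⟩
    rw [toR_add, hb, smul_add, smul_smul, smul_smul]
    push_cast
    congr 1
    · congr 1; field_simp
    · rw [mul_one_div_cancel h0, one_smul]

lemma mem_ΓI_of_mono_mem (x : Fin p → R) (hR : IsRegularDomain R) (hx : IsGRSOP x) (I : Ideal R)
    {a : Fin p → ℕ} (ha : mono x a ∈ intClosure I) : toR a ∈ ΓI x I := by
  by_contra hna
  have hm := prime_m x hx
  obtain ⟨n, hn, c, hc, e⟩ := ha
  have h1 : ∀ i ∈ Finset.Icc 1 n, c i * mono x a ^ (n - i) ∈ sat _ hm (NI x (n • a)) := by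
    intro i hi
    have hi' := Finset.mem_Icc.1 hi
    have h2 : c i ∈ sat _ hm
        (Ideal.span (mono x '' {b | ∃ u ∈ ΓI x I, toR b = (i : ℝ) • u})) :=
      sat_mono (pow_le_span x I i hi'.1)
        (sat_pow i (Ideal.pow_right_mono (le_sat_SI x hR hx I) i (hc i hi)))
    obtain ⟨h, hh, h3⟩ := h2
    refine ⟨h, hh, ?_⟩
    rw [← mul_assoc, ← mono_smul]
    have h4 := Ideal.mul_mem_mul h3 (Ideal.mem_span_singleton_self (mono x ((n - i) • a)))
    refine (?_ : _ ≤ NI x (n • a)) h4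
    rw [Ideal.span_mul_span', Ideal.span_le]
    rintro _ ⟨_, ⟨b, ⟨u, hu, hb⟩, rfl⟩, _, rfl, rfl⟩
    have h5 : mono x (b + (n - i) • a) ∈ NI x (n • a) := by
      apply mono_mem_NI
      intro hle
      apply hna
      refine ΓI_up x hR hx I hu fun k => ?_
      have h6 : b k ≤ i * a k := by
        have := hle k
        simp only [Pi.add_apply, Pi.smul_apply, smul_eq_mul] at this
        obtain ⟨d, rfl⟩ := Nat.exists_eq_add_of_le hi'.2
        rw [Nat.add_sub_cancel_left, add_mul] at this
        omega
      have h7 : (b k : ℝ) = i * u k := congrFun hb k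
      have h8 : (i : ℝ) * u k ≤ i * a k := by rw [← h7]; exact_mod_cast h6
      have h9 : (0 : ℝ) < i := by exact_mod_cast hi'.1
      exact le_of_mul_le_mul_left h8 h9
    rw [mono_add] at h5
    exact h5
  have h2 : mono x (n • a) ∈ sat _ hm (NI x (n • a)) := by
    rw [mono_smul, eq_neg_of_add_eq_zero_left e]
    exact Ideal.neg_mem_iff _ |>.2 (Ideal.sum_mem _ h1)
  obtain ⟨h, hh, h3⟩ := h2
  exact hh (colon_NI x hx _ _ h3)

lemma mono_mem_of_mem_ΓI (x : Fin p → R) (hR : IsRegularDomain R) (hx : IsGRSOP x) (J : Ideal R)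
    {B : Set (Fin p → ℕ)} (hJ : intClosure J = ↑(Ideal.span (mono x '' B)))
    {a : Fin p → ℕ} (ha : toR a ∈ ΓI x J) : mono x a ∈ intClosure J := by
  have hsub : SI x J ⊆ {b | mono x b ∈ intClosure J} := by
    intro b hb
    simp only [SI, Set.mem_iUnion] at hb
    obtain ⟨f, hf, hb⟩ := hb
    have hf' : f ∈ Ideal.span (mono x '' B) := by
      have := le_intClosure J hf
      rw [hJ] at this
      exact this
    obtain ⟨d, hd, hdb⟩ := supp_ge x hR hx hf' hb
    show mono x b ∈ intClosure J
    rw [hJ]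
    exact Ideal.mem_of_dvd _ (mono_dvd x hdb) (Ideal.subset_span ⟨d, hd, rfl⟩)
  rw [ΓI_eq] at ha
  obtain ⟨ι, t, N, u, hu, hN, e⟩ := nat_combination (convexHull_mono (Set.image_mono hsub) ha)
  refine mem_intClosure_of_pow J t (fun j => mono x (u j)) N hu hN ?_
  rw [← mono_smul, e, mono_sum]
  simp only [mono_smul]

lemma ΓI_le (x : Fin p → R) (hR : IsRegularDomain R) (hx : IsGRSOP x) (I J : Ideal R)
    {B : Set (Fin p → ℕ)} (hJ : intClosure J = ↑(Ideal.span (mono x '' B)))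
    (h : intClosure I = intClosure J) : ΓI x I ⊆ ΓI x J := by
  refine convexHull_min ?_ (convex_convexHull _ _)
  rintro _ ⟨a, ha, rfl⟩
  simp only [Set.mem_iUnion] at ha
  obtain ⟨f, hf, ha⟩ := ha
  have hf' : f ∈ Ideal.span (mono x '' B) := by
    have := le_intClosure I hf
    rw [h, hJ] at this
    exact this
  obtain ⟨b, hb, hba⟩ := supp_ge x hR hx hf' ha
  have hb' : toR b ∈ ΓI x J := by
    apply mem_ΓI_of_mono_mem x hR hx J
    rw [hJ]
    exact Ideal.subset_span ⟨b, hb, rfl⟩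
  refine ΓI_up x hR hx J hb' fun k => ?_
  exact Nat.cast_le.2 (hba k)

lemma intClosure_le (x : Fin p → R) (hR : IsRegularDomain R) (hx : IsGRSOP x) (I J : Ideal R)
    {A B : Set (Fin p → ℕ)} (hI : intClosure I = ↑(Ideal.span (mono x '' A)))
    (hJ : intClosure J = ↑(Ideal.span (mono x '' B)))
    (h : ΓI x I = ΓI x J) : intClosure I ⊆ intClosure J := by
  rw [hI, hJ, SetLike.coe_subset_coe, Ideal.span_le, ← hJ]
  rintro _ ⟨a, ha, rfl⟩
  apply mono_mem_of_mem_ΓI x hR hx J hJ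
  rw [← h]
  apply mem_ΓI_of_mono_mem x hR hx I
  rw [hI]
  exact Ideal.subset_span ⟨a, ha, rfl⟩

/-- ideals with monomial integral closures have equal closures iff
equal Newton polyhedra. -/
theorem intClosure_eq_iff_newtonPolyhedron_eq {R : Type*} [CommRing R] {p : ℕ}
    (x : Fin p → R) (hR : IsRegularDomain R) (hx : IsGRSOP x) (I J : Ideal R)
    (hI : ∃ A : Set (Fin p → ℕ), intClosure I = ↑(Ideal.span (mono x '' A)))
    (hJ : ∃ A : Set (Fin p → ℕ), intClosure J = ↑(Ideal.span (mono x '' A))) :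
    intClosure I = intClosure J ↔ ΓI x I = ΓI x J := by
  obtain ⟨A, hA⟩ := hI
  obtain ⟨B, hB⟩ := hJ
  constructor
  · intro h
    exact (ΓI_le x hR hx I J hB h).antisymm (ΓI_le x hR hx J I hA h.symm)
  · intro h
    exact (intClosure_le x hR hx I J hA hB h).antisymm (intClosure_le x hR hx J I hB hA h.symm)

end NND
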